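/- Let p ≥ 3 be a prime number. The generating function Σ_{n≥0} |D_n^p| x^n equals 2·x^p·(1 + x·m(x))^{p-2}·( x^2·(x·m(x))′ + 1 ), where m(x) = Σ_{n≥0} M_n x^n and ′ denotes the formal derivative of formal power series. -/

import Mathlib

/-- A Dyck path of semilength `n`, encoded as a word on `Bool`
(`true` = up step `u`, `false` = down step `d`). -/
def IsDyckWord (n : ℕ) (w : List Bool) : Prop :=
  w.length = 2 * n ∧ w.count true = n ∧ w.count false = n ∧
    ∀ p : List Bool, p <+: w → p.count false ≤ p.count true

/-- The (0-based) indices of the up steps of `w`. -/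
def upIdxs (w : List Bool) : List ℕ := w.findIdxs (· == true)

/-- The (0-based) indices of the down steps of `w`. -/
def downIdxs (w : List Bool) : List ℕ := w.findIdxs (· == false)

/-- `rStat w i` is the number of `d`'s strictly between the `i`-th and the
`(i+1)`-st `u` of `w` (with `i` 1-indexed). -/
def rStat (w : List Bool) (i : ℕ) : ℕ :=
  ((w.take ((upIdxs w).getD i 0)).drop ((upIdxs w).getD (i - 1) 0 + 1)).count false

/-- `sStat w i` is the number of `u`'s strictly between the `i`-th and the
`(i+1)`-st `d` of `w` (with `i` 1-indexed). -/
def sStat (w : List Bool) (i : ℕ) : ℕ :=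
  ((w.take ((downIdxs w).getD i 0)).drop ((downIdxs w).getD (i - 1) 0 + 1)).count true

/-- The statistic `L(D) = ∏_{i=1}^{n-1} C(r_i + s_i, r_i)` of a Dyck path of semilength `n`. -/
def LStat (n : ℕ) (w : List Bool) : ℕ :=
  ∏ i ∈ Finset.Icc 1 (n - 1), Nat.choose (rStat w i + sStat w i) (rStat w i)

/-- `dyckL n k` = the set `𝒟ₙᵏ` of Dyck paths of semilength `n` with `L(D) = k`. -/
def dyckL (n k : ℕ) : Set (List Bool) := {w | IsDyckWord n w ∧ LStat n w = k}

/-- A Motzkin path, encoded as a word on `Option Bool`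
(`some true` = up, `some false` = down, `none` = horizontal). -/
def IsMotzkinWord (w : List (Option Bool)) : Prop :=
  w.count (some false) = w.count (some true) ∧
    ∀ p : List (Option Bool), p <+: w → p.count (some false) ≤ p.count (some true)

/-- `motzkin n` = the `n`-th Motzkin number `Mₙ`, the number of Motzkin paths of length `n`. -/
noncomputable def motzkin (n : ℕ) : ℕ :=
  {w : List (Option Bool) | w.length = n ∧ IsMotzkinWord w}.ncard

/-- The Motzkin ballot number `T_{n,k}`: the number of Motzkin paths of length `n`
whose first down step is in position `k` (1-indexed); by convention `T_{k-1,k} = 1`,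
counting the path of `k-1` horizontal steps. -/
noncomputable def motzkinBallot (n k : ℕ) : ℕ :=
  if n + 1 = k then 1
  else
    {w : List (Option Bool) | w.length = n ∧ IsMotzkinWord w ∧
      w.getD (k - 1) none = some false ∧ ∀ j < k - 1, w.getD j none ≠ some false}.ncard

/-- Motzkin numbers with integer index: `Mᵢ = 0` for `i < 0`. -/
noncomputable def motzkinZ (i : ℤ) : ℤ := if 0 ≤ i then (motzkin i.toNat : ℤ) else 0

/-- Motzkin ballot numbers with integer first index: `T_{n,k} = 0` for `n < 0`. -/
noncomputable def motzkinBallotZ (n : ℤ) (k : ℕ) : ℤ :=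
  if 0 ≤ n then (motzkinBallot n.toNat k : ℤ) else 0

/-- The set of returns of a Dyck path `w` of semilength `n`:
indices `1 ≤ k ≤ n` such that the path touches the `x`-axis after `2k` steps. -/
def returns (n : ℕ) (w : List Bool) : Finset ℕ :=
  (Finset.Icc 1 n).filter fun k => (w.take (2 * k)).count false = (w.take (2 * k)).count true

/-- `dyckRS n r s` = the set `𝒟ₙ^{r,s}` of Dyck paths of semilength `n` having exactly one
index `i` with `rᵢ > 0` and `sᵢ > 0`, and such that at that index `rᵢ = r` and `sᵢ = s`. -/
def dyckRS (n r s : ℕ) : Set (List Bool) :=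
  {w | IsDyckWord n w ∧ ∃ i ∈ Finset.Icc 1 (n - 1),
    (0 < rStat w i ∧ 0 < sStat w i) ∧ rStat w i = r ∧ sStat w i = s ∧
      ∀ j ∈ Finset.Icc 1 (n - 1), 0 < rStat w j ∧ 0 < sStat w j → j = i}

/-- `twoStars n w k₁ k₂` says that `k₁ < k₂` are exactly the two indices `i` of `w`
with `rᵢ > 0` and `sᵢ > 0`. -/
def twoStars (n : ℕ) (w : List Bool) (k₁ k₂ : ℕ) : Prop :=
  k₁ ∈ Finset.Icc 1 (n - 1) ∧ k₂ ∈ Finset.Icc 1 (n - 1) ∧ k₁ < k₂ ∧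
    (0 < rStat w k₁ ∧ 0 < sStat w k₁) ∧ (0 < rStat w k₂ ∧ 0 < sStat w k₂) ∧
    ∀ j ∈ Finset.Icc 1 (n - 1), 0 < rStat w j ∧ 0 < sStat w j → j = k₁ ∨ j = k₂

/-- `xStat w k` = the number of indices `i < k` with `rᵢ = 0` and `sᵢ > 0`. -/
def xStat (w : List Bool) (k : ℕ) : ℕ :=
  ((Finset.Ico 1 k).filter fun i => rStat w i = 0 ∧ 0 < sStat w i).card

/-- `yStat w k` = the number of indices `i < k` with `rᵢ > 0` and `sᵢ = 0`. -/
def yStat (w : List Bool) (k : ℕ) : ℕ :=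
  ((Finset.Ico 1 k).filter fun i => 0 < rStat w i ∧ sStat w i = 0).card

/-- The generating function `m(x) = Σ Mₙ xⁿ` of the Motzkin numbers, over `ℚ`. -/
noncomputable def motzkinGF : PowerSeries ℚ := PowerSeries.mk fun n => (motzkin n : ℚ)

/-!
Recording which up steps and which down steps end a run turns the Dyck paths of semilength `n + 1`
into the bicolored Motzkin walks of length `n`, where `rᵢ` and `sᵢ` are both positive iff the `i`-th
step is horizontal of a fixed one of the two colors, a star. As `C(r + s, r)` is a prime `p` only
for `{r, s} = {1, p - 1}`, the condition `L(D) = p` means that there is exactly one star and that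
`{rᵢ, sᵢ} = {1, p - 1}` there.

Cutting at the star leaves two Motzkin walks from a common height `t` down to `0`, and `rᵢ`, `sᵢ`
are the gaps after their `t`-th down steps. With `f = x m(x)`, the walks from `t` with gap `r` have
the generating function `(x (1 + f))^(r - 1) f^t`, so summing over `t` leaves `1 / (1 - f²)`, which
equals `x² f′ + 1` by differentiating `f = x + x f + x f²`.
-/

/-! ### Gaps in bit lists -/

/-- The distance between the `j`-th and the `(j + 1)`-st `true` of `true :: (l ++ [true])`, counted
from `0`; the sentinels at both ends make it positive. Beyond the last `true` it has the junk value
`1`. -/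
def trueGap : List Bool → ℕ → ℕ
  | [], _ => 1
  | true :: _, 0 => 1
  | true :: l, j + 1 => trueGap l j
  | false :: l, 0 => trueGap l 0 + 1
  | false :: l, j + 1 => trueGap l (j + 1)

theorem trueGap_pos (l : List Bool) (j : ℕ) : 0 < trueGap l j := by
  fun_induction trueGap l j <;> omega

theorem trueGap_append_true_cons (l l' : List Bool) (j : ℕ) :
    trueGap (l ++ true :: l') (l.count true + 1 + j) = trueGap l' j := by
  rw [add_right_comm]
  induction l with
  | nil => simp [trueGap]
  | cons a l ih => cases a <;> simpa [trueGap, add_right_comm _ 1 j] using ih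

theorem trueGap_append_true_cons_of_le {l : List Bool} {j : ℕ} (hj : j ≤ l.count true)
    (l' : List Bool) : trueGap (l ++ true :: l') j = trueGap l j := by
  induction l generalizing j with
  | nil => simp_all [trueGap]
  | cons a l ih => cases a <;> cases j <;> simp_all [trueGap]

theorem trueGap_append_false {l : List Bool} {j : ℕ} (hj : j ≤ l.count true) :
    trueGap (l ++ [false]) j = trueGap l j + if j = l.count true then 1 else 0 := by
  induction l generalizing j with
  | nil => simp_all [trueGap]
  | cons a l ih =>
    cases a <;> cases j <;> simp_all [trueGap]
    omega

theorem trueGap_reverse {l : List Bool} {j : ℕ} (hj : j ≤ l.count true) :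
    trueGap l.reverse j = trueGap l (l.count true - j) := by
  induction l generalizing j with
  | nil => simp_all
  | cons a l ih =>
    cases a
    · have hj' : j ≤ l.count true := by simpa using hj
      rw [List.reverse_cons, trueGap_append_false (by simpa using hj'), ih hj']
      rcases hj'.lt_or_eq with hlt | rfl
      · obtain ⟨k, hk⟩ := Nat.exists_eq_add_of_lt hlt
        simp [hk, trueGap, add_assoc]
      · simp [trueGap]
    · rw [List.reverse_cons, List.count_cons_self]
      rcases Nat.le_or_eq_of_le_succ (by simpa using hj) with hj' | rfl
      · rw [trueGap_append_true_cons_of_le (by simpa using hj'), ih hj', Nat.succ_sub hj', trueGap]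
      · simpa [trueGap] using trueGap_append_true_cons l.reverse [] 0

/-! ### Ends of runs -/

/-- The bits telling, for each occurrence of `c` in a word, whether it ends a maximal run of `c`. -/
def runEnds (c : Bool) : List Bool → List Bool
  | [] => []
  | a :: w => if a = c then decide (w.head? ≠ some c) :: runEnds c w else runEnds c w

/-- The word, starting with a run of `m`, in which `α` and `β` tell which occurrences of `true` and
of `false`, respectively, end their run. -/
def ofRunEnds : Bool → List Bool → List Bool → List Bool
  | true, a :: α, β => true :: ofRunEnds (!a) α β
  | true, [], _ => []
  | false, α, b :: β => false :: ofRunEnds b α β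
  | false, _, [] => []
termination_by _ α β => α.length + β.length

theorem length_runEnds (c : Bool) (w : List Bool) : (runEnds c w).length = w.count c := by
  induction w with
  | nil => rfl
  | cons a w ih => by_cases h : a = c <;> simp [runEnds, h, ih]

theorem getLast?_runEnds_ne (c : Bool) (w : List Bool) :
    (runEnds c w).getLast? ≠ some false := by
  induction w with
  | nil => simp [runEnds]
  | cons a w ih =>
    by_cases h : a = c
    · rcases hw : runEnds c w with _ | ⟨b, l⟩
      · have : w.head? ≠ some c := by rintro h'; cases w <;> simp_all [runEnds]
        simp [runEnds, h, hw, this]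
      · simpa [runEnds, h, hw] using ih
    · simpa [runEnds, h] using ih

theorem exists_runEnds_eq_append {c : Bool} {w : List Bool} {n : ℕ} (hw : w.count c = n + 1) :
    ∃ l, l.length = n ∧ runEnds c w = l ++ [true] := by
  have hlast := getLast?_runEnds_ne c w
  have hlen := length_runEnds c w
  rcases List.eq_nil_or_concat' (runEnds c w) with h | ⟨l, a, h⟩
  · simp [h, hw] at hlen
  · cases a <;> simp_all

theorem ofRunEnds_runEnds {m : Bool} {w : List Bool} (h : ∀ a ∈ w.head?, a = m) :
    ofRunEnds m (runEnds true w) (runEnds false w) = w := by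
  induction w generalizing m with
  | nil => cases m <;> simp [runEnds, ofRunEnds]
  | cons a w ih =>
    obtain rfl : a = m := h a rfl
    have hw : ofRunEnds (if w.head? = some a then a else !a) (runEnds true w) (runEnds false w)
        = w := by
      refine ih fun b hb => ?_
      rw [Option.mem_def] at hb
      cases a <;> cases b <;> simp [hb]
    cases a <;> split_ifs at hw with ha <;> simpa [runEnds, ofRunEnds, ha] using hw

theorem head?_ofRunEnds_true (α β : List Bool) :
    (ofRunEnds true α β).head? = if α = [] then none else some true := by
  cases α <;> simp [ofRunEnds]

theorem head?_ofRunEnds_false (α β : List Bool) :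
    (ofRunEnds false α β).head? = if β = [] then none else some false := by
  cases β <;> simp [ofRunEnds]

theorem getLast?_ne_of_cons {A : Type*} {x a : A} {l : List A}
    (h : (a :: l).getLast? ≠ some x) : l.getLast? ≠ some x := by
  cases l <;> simp_all

theorem eq_nil_of_count_true_eq_zero {l : List Bool} (h : l.getLast? ≠ some false)
    (h0 : l.count true = 0) : l = [] := by
  rcases List.eq_nil_or_concat' l with rfl | ⟨l, a, rfl⟩
  · rfl
  · cases a <;> simp_all

theorem runEnds_ofRunEnds {m : Bool} {α β : List Bool} (hα : α.getLast? ≠ some false)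
    (hβ : β.getLast? ≠ some false) (hc : β.count true = α.count true + if m then 0 else 1) :
    runEnds true (ofRunEnds m α β) = α ∧ runEnds false (ofRunEnds m α β) = β := by
  fun_induction ofRunEnds m α β with
  | case1 a α β ih =>
    have := ih (getLast?_ne_of_cons hα) hβ (by cases a <;> simp_all)
    cases a
    · have : α ≠ [] := by rintro rfl; simp at hα
      simp_all [runEnds, head?_ofRunEnds_true]
    · have : β ≠ [] := by rintro rfl; simp at hc
      simp_all [runEnds, head?_ofRunEnds_false]
  | case2 β => simp [runEnds, eq_nil_of_count_true_eq_zero hβ (by simpa using hc)]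
  | case3 α b β ih =>
    have := ih hα (getLast?_ne_of_cons hβ) (by cases b <;> simp_all)
    cases b
    · have : β ≠ [] := by rintro rfl; simp at hβ
      simp_all [runEnds, head?_ofRunEnds_false]
    · simp_all [runEnds, head?_ofRunEnds_true]
  | case4 α => simp at hc

/-- Runs of the two letters alternate. -/
theorem count_true_runEnds (w : List Bool) :
    (runEnds true w).count true + (if w.head? = some false then 1 else 0) =
      (runEnds false w).count true + (if w.getLast? = some true then 1 else 0) := by
  induction w with
  | nil => rfl
  | cons a w ih =>
    rcases w with _ | ⟨b, w⟩
    · cases a <;> simp [runEnds]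
    · cases a <;> cases b <;> simp_all [runEnds]
      omega

/-- A path from height `h`, rising at `true` and falling at `false`, that never goes below `0`. -/
def StaysNonneg (h : ℕ) (w : List Bool) : Prop :=
  ∀ p, p <+: w → p.count false ≤ h + p.count true

theorem forall_prefix_cons {A : Type*} {a : A} {w : List A} {P : List A → Prop} :
    (∀ p, p <+: a :: w → P p) ↔ P [] ∧ ∀ p, p <+: w → P (a :: p) := by
  simp only [List.prefix_cons_iff]
  grind

theorem staysNonneg_true_cons {h : ℕ} {w : List Bool} :
    StaysNonneg h (true :: w) ↔ StaysNonneg (h + 1) w := by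
  simp [StaysNonneg, forall_prefix_cons, add_assoc, add_comm 1]

theorem staysNonneg_succ_false_cons {h : ℕ} {w : List Bool} :
    StaysNonneg (h + 1) (false :: w) ↔ StaysNonneg h w := by
  simp [StaysNonneg, forall_prefix_cons, add_right_comm h 1]

theorem not_staysNonneg_zero_false_cons {w : List Bool} : ¬ StaysNonneg 0 (false :: w) :=
  fun h => by simpa using h [false] (List.prefix_append [false] w)

/-- The height is smallest at the ends of runs of `false`, where it compares the position of the
`k`-th run end among the `true`s with that of the `k`-th run end among the `false`s. -/
theorem staysNonneg_iff_runEnds {h : ℕ} {w : List Bool} (hw : w.getLast? ≠ some true) :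
    StaysNonneg h w ↔
      ∀ i, ((runEnds true w).take i).count true + (if w.head? = some false then 1 else 0) ≤
        ((runEnds false w).take (i + h)).count true := by
  induction w generalizing h with
  | nil => simp [runEnds, StaysNonneg]
  | cons a w ih =>
    have hw' := getLast?_ne_of_cons hw
    cases a
    · rcases h with _ | h
      · exact iff_of_false not_staysNonneg_zero_false_cons fun H => by simpa using H 0
      · rw [staysNonneg_succ_false_cons, ih hw']
        rcases w with _ | ⟨b, w⟩
        · simp [runEnds, ← add_assoc]
        · cases b <;> simp [runEnds, ← add_assoc]
    · rw [staysNonneg_true_cons, ih hw']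
      rcases w with _ | ⟨b, w⟩
      · simp at hw
      · have hsucc (i : ℕ) : i + 1 + h = i + (h + 1) := by omega
        refine Iff.trans ?_ Nat.and_forall_add_one
        cases b <;> simp [runEnds, hsucc]

/-! ### The statistics read off the ends of runs -/

/-- The number of letters `!c` strictly between the `i`-th and the `(i + 1)`-st `c` of `w`, where
`i` counts from `1`; the common form of `rStat` and `sStat`. -/
def gapStat (c : Bool) (w : List Bool) (i : ℕ) : ℕ :=
  ((w.take ((w.findIdxs (· == c)).getD i 0)).drop
    ((w.findIdxs (· == c)).getD (i - 1) 0 + 1)).count (!c)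

theorem rStat_eq_gapStat : rStat = gapStat true := rfl

theorem sStat_eq_gapStat : sStat = gapStat false := rfl

theorem findIdxs_cons_self (c : Bool) (w : List Bool) :
    (c :: w).findIdxs (· == c) = 0 :: (w.findIdxs (· == c)).map (· + 1) := by
  rw [List.findIdxs_cons, List.findIdxs_start]; simp

theorem findIdxs_cons_not (c : Bool) (w : List Bool) :
    ((!c) :: w).findIdxs (· == c) = (w.findIdxs (· == c)).map (· + 1) := by
  rw [List.findIdxs_cons, List.findIdxs_start]; simp

theorem getD_map_succ_findIdxs {c : Bool} {w : List Bool} {i : ℕ} (hi : i < w.count c) :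
    ((w.findIdxs (· == c)).map (· + 1)).getD i 0 = (w.findIdxs (· == c)).getD i 0 + 1 := by
  have hi' : i < (w.findIdxs (· == c)).length := by rwa [List.length_findIdxs]
  simp [List.getD_eq_getElem?_getD, List.getElem?_eq_getElem hi']

theorem gapStat_cons_self {c : Bool} {w : List Bool} {i : ℕ} (hi : i + 1 < w.count c) :
    gapStat c (c :: w) (i + 2) = gapStat c w (i + 1) := by
  simp only [gapStat, findIdxs_cons_self, Nat.add_sub_cancel, Nat.add_succ_sub_one,
    List.getD_cons_succ]
  rw [getD_map_succ_findIdxs hi, getD_map_succ_findIdxs (by omega)]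
  simp

theorem gapStat_cons_not {c : Bool} {w : List Bool} {i : ℕ} (hi : i + 1 < w.count c) :
    gapStat c ((!c) :: w) (i + 1) = gapStat c w (i + 1) := by
  simp only [gapStat, findIdxs_cons_not, Nat.add_sub_cancel]
  rw [getD_map_succ_findIdxs hi, getD_map_succ_findIdxs (by omega)]
  simp

theorem count_not_take_findIdxs {c : Bool} {w : List Bool} (hw : 0 < w.count c) :
    (w.take ((w.findIdxs (· == c)).getD 0 0)).count (!c) =
      if w.head? = some (!c) then trueGap (runEnds (!c) w) 0 else 0 := by
  induction w with
  | nil => simp at hw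
  | cons a w ih =>
    rcases Bool.eq_or_eq_not a c with rfl | rfl
    · simp
    · have hw' : 0 < w.count c := by simpa using hw
      have := ih hw'
      rw [findIdxs_cons_not, getD_map_succ_findIdxs hw']
      rcases w with _ | ⟨b, w⟩
      · simp at hw'
      · rcases Bool.eq_or_eq_not b c with rfl | rfl <;> simp_all [runEnds, trueGap]

theorem gapStat_cons_self_one {c : Bool} {w : List Bool} (hw : 0 < w.count c) :
    gapStat c (c :: w) 1 = if w.head? = some (!c) then trueGap (runEnds (!c) w) 0 else 0 := by
  rw [← count_not_take_findIdxs hw, gapStat, findIdxs_cons_self, List.getD_cons_succ,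
    getD_map_succ_findIdxs hw]
  simp

theorem gapStat_eq_trueGap {c : Bool} {w : List Bool} {i : ℕ} (hi : i + 1 < w.count c) :
    gapStat c w (i + 1) = if (runEnds c w).getD i false then
      trueGap (runEnds (!c) w) (((runEnds c w).take i).count true +
        if w.head? = some (!c) then 1 else 0) else 0 := by
  induction w generalizing i with
  | nil => simp at hi
  | cons a w ih =>
    rcases Bool.eq_or_eq_not a c with rfl | rfl
    · rcases i with _ | i
      · rw [gapStat_cons_self_one (by simpa using hi)]
        rcases w with _ | ⟨b, w⟩
        · simp at hi
        · rcases Bool.eq_or_eq_not b a with rfl | rfl <;> simp [runEnds]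
      · have hi' : i + 1 < w.count a := by simpa using hi
        rw [gapStat_cons_self hi', ih hi']
        rcases w with _ | ⟨b, w⟩
        · simp at hi'
        · rcases Bool.eq_or_eq_not b a with rfl | rfl <;> simp [runEnds]
    · have hi' : i + 1 < w.count c := by simpa using hi
      rw [gapStat_cons_not hi', ih hi']
      rcases w with _ | ⟨b, w⟩
      · simp at hi'
      · rcases Bool.eq_or_eq_not b c with rfl | rfl <;> simp [runEnds, trueGap]

/-! ### Bicolored Motzkin walks -/

/-- Walks on heights `≥ 0` from `h` to `k`. A step is a pair of bits: the first raises the height by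
one, the second lowers it by one, so `(true, false)` is an up step, `(false, true)` a down step, and
there are two colors of horizontal steps, `(false, false)` and `(true, true)`. -/
def IsWalk : ℕ → List (Bool × Bool) → ℕ → Prop
  | h, [], k => h = k
  | h, z :: Z, k => ∃ j, h + z.1.toNat = j + z.2.toNat ∧ IsWalk j Z k

theorem isWalk_append {h k : ℕ} {Z Z' : List (Bool × Bool)} :
    IsWalk h (Z ++ Z') k ↔ ∃ j, IsWalk h Z j ∧ IsWalk j Z' k := by
  induction Z generalizing h with
  | nil => simp [IsWalk]
  | cons z Z ih => simp only [List.cons_append, IsWalk, ih]; grind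

theorem isWalk_reverse_swap {h k : ℕ} {Z : List (Bool × Bool)} :
    IsWalk h (Z.reverse.map Prod.swap) k ↔ IsWalk k Z h := by
  induction Z generalizing k with
  | nil => simp [IsWalk, eq_comm]
  | cons z Z ih =>
    simp only [List.reverse_cons, List.map_append, isWalk_append, ih]
    simp [IsWalk, and_comm, eq_comm]

theorem isWalk_iff {h k : ℕ} {Z : List (Bool × Bool)} :
    IsWalk h Z k ↔
      h + (Z.map Prod.fst).count true = k + (Z.map Prod.snd).count true ∧
        ∀ i, ((Z.map Prod.snd).take i).count true ≤ h + ((Z.map Prod.fst).take i).count true := by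
  induction Z generalizing h with
  | nil => simp [IsWalk]
  | cons z Z ih =>
    have count_cons (b : Bool) (l : List Bool) : (b :: l).count true = l.count true + b.toNat := by
      cases b <;> simp
    rw [← Nat.and_forall_add_one, IsWalk]
    simp only [ih, List.map_cons, List.take_succ_cons, count_cons]
    constructor
    · rintro ⟨j, hj, hcount, hle⟩
      refine ⟨by omega, by simp, fun i => ?_⟩
      have := hle i
      omega
    · rintro ⟨hcount, -, hle⟩
      have hz : z.2.toNat ≤ h + z.1.toNat := by simpa using hle 0
      refine ⟨h + z.1.toNat - z.2.toNat, by omega, by omega, fun i => ?_⟩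
      have := hle i
      omega

theorem IsWalk.count_eq {h k : ℕ} {Z : List (Bool × Bool)} (hZ : IsWalk h Z k) :
    h + (Z.map Prod.fst).count true = k + (Z.map Prod.snd).count true :=
  (isWalk_iff.1 hZ).1

/-- Walks with as many bits raising as bits lowering the height. -/
abbrev IsBalanced (Z : List (Bool × Bool)) : Prop :=
  (Z.map Prod.fst).count true = (Z.map Prod.snd).count true

theorem IsWalk.isBalanced {h : ℕ} {Z : List (Bool × Bool)} (hZ : IsWalk h Z h) : IsBalanced Z :=
  Nat.add_left_cancel hZ.count_eq

theorem IsWalk.unique {h h' k : ℕ} {Z : List (Bool × Bool)} (hZ : IsWalk h Z k)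
    (hZ' : IsWalk h' Z k) : h = h' := by
  have := hZ.count_eq
  have := hZ'.count_eq
  omega

theorem IsWalk.le_length {h : ℕ} {Z : List (Bool × Bool)} (hZ : IsWalk h Z 0) : h ≤ Z.length := by
  have := hZ.count_eq
  have := (Z.map Prod.snd).count_le_length (a := true)
  rw [List.length_map] at this
  omega

/-! ### Dyck words as bicolored Motzkin walks -/

/-- The Dyck word whose `i`-th down (up) step ends its run iff the first (second) bit of the `i`-th
step of `Z` is set; its last up and down steps, which always do, have no counterpart in `Z`. -/
def dyckOfWalk (Z : List (Bool × Bool)) : List Bool :=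
  ofRunEnds true (Z.map Prod.snd ++ [true]) (Z.map Prod.fst ++ [true])

theorem head?_dyckOfWalk (Z : List (Bool × Bool)) : (dyckOfWalk Z).head? = some true := by
  simp [dyckOfWalk, head?_ofRunEnds_true]

theorem runEnds_true_dyckOfWalk {Z : List (Bool × Bool)} (hZ : IsBalanced Z) :
    runEnds true (dyckOfWalk Z) = Z.map Prod.snd ++ [true] :=
  (runEnds_ofRunEnds (by simp) (by simp) (by simp [hZ])).1

theorem runEnds_false_dyckOfWalk {Z : List (Bool × Bool)} (hZ : IsBalanced Z) :
    runEnds false (dyckOfWalk Z) = Z.map Prod.fst ++ [true] :=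
  (runEnds_ofRunEnds (by simp) (by simp) (by simp [hZ])).2

theorem count_dyckOfWalk {Z : List (Bool × Bool)} (hZ : IsBalanced Z) (c : Bool) :
    (dyckOfWalk Z).count c = Z.length + 1 := by
  rw [← length_runEnds]
  cases c <;> simp [runEnds_true_dyckOfWalk hZ, runEnds_false_dyckOfWalk hZ]

theorem getLast?_dyckOfWalk_ne {Z : List (Bool × Bool)} (hZ : IsBalanced Z) :
    (dyckOfWalk Z).getLast? ≠ some true := fun h => by
  simpa [h, head?_dyckOfWalk, runEnds_true_dyckOfWalk hZ, runEnds_false_dyckOfWalk hZ, hZ] using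
    count_true_runEnds (dyckOfWalk Z)

theorem isDyckWord_dyckOfWalk_iff {Z : List (Bool × Bool)} (hZ : IsBalanced Z) :
    IsDyckWord (Z.length + 1) (dyckOfWalk Z) ↔ IsWalk 0 Z 0 := by
  have hlen : (dyckOfWalk Z).length = 2 * (Z.length + 1) := by
    have := List.count_not_add_count (dyckOfWalk Z) true
    simp only [count_dyckOfWalk hZ] at this
    omega
  have hnonneg := staysNonneg_iff_runEnds (h := 0) (getLast?_dyckOfWalk_ne hZ)
  simp only [StaysNonneg, runEnds_true_dyckOfWalk hZ, runEnds_false_dyckOfWalk hZ, zero_add,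
    head?_dyckOfWalk, List.take_append, List.length_map, List.count_append] at hnonneg
  simp [IsDyckWord, hlen, count_dyckOfWalk hZ, isWalk_iff, hZ, hnonneg]

theorem rStat_dyckOfWalk {Z : List (Bool × Bool)} (hZ : IsBalanced Z) {i : ℕ} (hi : i < Z.length) :
    rStat (dyckOfWalk Z) (i + 1) =
      if Z[i].2 then trueGap (Z.map Prod.fst) (((Z.map Prod.snd).take i).count true) else 0 := by
  rw [rStat_eq_gapStat, gapStat_eq_trueGap (by rw [count_dyckOfWalk hZ]; omega)]
  have hle : ((Z.map Prod.snd).take i).count true ≤ (Z.map Prod.fst).count true :=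
    ((List.take_sublist _ _).count_le _).trans hZ.ge
  simp [runEnds_true_dyckOfWalk hZ, runEnds_false_dyckOfWalk hZ, head?_dyckOfWalk, List.take_append,
    hi, hi.le, Nat.sub_eq_zero_of_le, trueGap_append_true_cons_of_le hle]

theorem sStat_dyckOfWalk {Z : List (Bool × Bool)} (hZ : IsBalanced Z) {i : ℕ} (hi : i < Z.length) :
    sStat (dyckOfWalk Z) (i + 1) =
      if Z[i].1 then trueGap (Z.map Prod.snd) (((Z.map Prod.fst).take i).count true + 1)
      else 0 := by
  rw [sStat_eq_gapStat, gapStat_eq_trueGap (by rw [count_dyckOfWalk hZ]; omega)]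
  have hle (h : Z[i].1 = true) :
      ((Z.map Prod.fst).take i).count true + 1 ≤ (Z.map Prod.snd).count true := by
    have htake : (Z.map Prod.fst).take (i + 1) = (Z.map Prod.fst).take i ++ [true] := by
      rw [List.take_succ_eq_append_getElem (by simpa using hi)]
      simp [h]
    have := ((Z.map Prod.fst).take_sublist (i + 1)).count_le true
    simpa [htake, hZ] using this
  simp only [Bool.not_false, runEnds_true_dyckOfWalk hZ, runEnds_false_dyckOfWalk hZ,
    head?_dyckOfWalk]
  by_cases h : Z[i].1
  · simp [h, hi, hi.le, List.take_append, Nat.sub_eq_zero_of_le,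
      trueGap_append_true_cons_of_le (hle h)]
  · simp [h, hi, List.getElem?_append_left]

theorem exists_dyckOfWalk_eq {n : ℕ} {w : List Bool} (hw : IsDyckWord (n + 1) w) :
    ∃ Z, Z.length = n ∧ IsWalk 0 Z 0 ∧ dyckOfWalk Z = w := by
  have ⟨_, htrue, hfalse, hnonneg⟩ := hw
  obtain ⟨α, hα, hαw⟩ := exists_runEnds_eq_append htrue
  obtain ⟨β, hβ, hβw⟩ := exists_runEnds_eq_append hfalse
  have hhead : w.head? = some true := by
    rcases w with _ | ⟨_ | _, w⟩
    · simp at htrue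
    · simpa using hnonneg [false] (List.prefix_append [false] w)
    · rfl
  have hlast : w.getLast? ≠ some true := by
    rcases List.eq_nil_or_concat' w with rfl | ⟨w, _ | _, rfl⟩
    · simp
    · simp
    · have := hnonneg w (List.prefix_append w [true])
      simp only [List.count_append, List.count_singleton_self, List.count_singleton, beq_iff_eq,
        Bool.true_eq_false, if_false, add_zero] at htrue hfalse
      omega
  have hbalanced : α.count true = β.count true := by
    simpa [hhead, hlast, hαw, hβw] using count_true_runEnds w
  have hfst : (β.zip α).map Prod.fst = β := List.map_fst_zip (by omega)
  have hsnd : (β.zip α).map Prod.snd = α := List.map_snd_zip (by omega)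
  have hdyck : dyckOfWalk (β.zip α) = w := by
    rw [dyckOfWalk, hfst, hsnd, ← hαw, ← hβw, ofRunEnds_runEnds (by simp [hhead])]
  have hlen : (β.zip α).length = n := by simp [hα, hβ]
  refine ⟨β.zip α, hlen, ?_, hdyck⟩
  rw [← isDyckWord_dyckOfWalk_iff (by rw [IsBalanced, hfst, hsnd, hbalanced]), hdyck, hlen]
  exact hw

theorem dyckOfWalk_injOn : Set.InjOn dyckOfWalk {Z | IsBalanced Z} := by
  intro Z hZ Z' hZ' h
  have hsnd := runEnds_true_dyckOfWalk hZ
  have hfst := runEnds_false_dyckOfWalk hZ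
  rw [h, runEnds_true_dyckOfWalk hZ'] at hsnd
  rw [h, runEnds_false_dyckOfWalk hZ'] at hfst
  rw [← List.zip_unzip Z, ← List.zip_unzip Z', List.unzip_eq_map, List.unzip_eq_map,
    List.append_cancel_right hfst, List.append_cancel_right hsnd]

theorem dyckOfWalk_mem_dyckRS_iff {Z : List (Bool × Bool)} (hZ : IsWalk 0 Z 0) {r s : ℕ}
    (hr : 0 < r) (hs : 0 < s) :
    dyckOfWalk Z ∈ dyckRS (Z.length + 1) r s ↔
      ∃ i, rStat (dyckOfWalk Z) (i + 1) = r ∧ sStat (dyckOfWalk Z) (i + 1) = s ∧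
        ∀ j, Z[j]? = some (true, true) ↔ j = i := by
  have hbalanced := hZ.isBalanced
  have hstar {j : ℕ} (hj : j < Z.length) :
      0 < rStat (dyckOfWalk Z) (j + 1) ∧ 0 < sStat (dyckOfWalk Z) (j + 1) ↔
        Z[j]? = some (true, true) := by
    rw [rStat_dyckOfWalk hbalanced hj, sStat_dyckOfWalk hbalanced hj, List.getElem?_eq_getElem hj,
      Option.some_inj, Prod.ext_iff, and_comm]
    refine and_congr ?_ ?_ <;> split_ifs with h <;> simp [h, trueGap_pos]
  have hdyck := (isDyckWord_dyckOfWalk_iff hbalanced).2 hZ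
  constructor
  · rintro ⟨-, i, hi, hpos, hr, hs, hunique⟩
    obtain ⟨hipos, hile⟩ := Finset.mem_Icc.1 hi
    obtain ⟨i, rfl⟩ := Nat.exists_eq_add_of_le' hipos
    have hi : i < Z.length := hile
    refine ⟨i, hr, hs, fun j => ⟨fun hj => ?_, ?_⟩⟩
    · obtain ⟨hjlt, -⟩ := List.getElem?_eq_some_iff.1 hj
      simpa using hunique (j + 1) (Finset.mem_Icc.2 ⟨j.succ_pos, hjlt⟩) ((hstar hjlt).2 hj)
    · rintro rfl
      exact (hstar hi).1 hpos
  · rintro ⟨i, rfl, rfl, hstars⟩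
    refine ⟨hdyck, i + 1, ?_, ⟨hr, hs⟩, rfl, rfl, fun j hj hpos => ?_⟩
    · obtain ⟨hi, -⟩ := List.getElem?_eq_some_iff.1 ((hstars i).2 rfl)
      exact Finset.mem_Icc.2 ⟨i.succ_pos, hi⟩
    · obtain ⟨hjpos, hjle⟩ := Finset.mem_Icc.1 hj
      obtain ⟨j, rfl⟩ := Nat.exists_eq_add_of_le' hjpos
      have hj : j < Z.length := hjle
      rw [(hstars j).1 ((hstar hj).1 hpos)]

/-! ### Splitting at the color `(true, true)` -/

/-- The walk that follows `x.1` backwards, makes a step of color `(true, true)` and then follows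
`x.2`. -/
def joinAtStar (x : List (Bool × Bool) × List (Bool × Bool)) : List (Bool × Bool) :=
  x.1.reverse.map Prod.swap ++ (true, true) :: x.2

theorem length_joinAtStar (x : List (Bool × Bool) × List (Bool × Bool)) :
    (joinAtStar x).length = x.1.length + x.2.length + 1 := by
  simp [joinAtStar, add_assoc]

theorem isWalk_joinAtStar {V W : List (Bool × Bool)} :
    IsWalk 0 (joinAtStar (V, W)) 0 ↔ ∃ t, IsWalk t V 0 ∧ IsWalk t W 0 := by
  simp only [joinAtStar, isWalk_append, isWalk_reverse_swap]
  simp [IsWalk]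

theorem rStat_dyckOfWalk_joinAtStar {t : ℕ} {V W : List (Bool × Bool)} (hV : IsWalk t V 0)
    (hW : IsWalk t W 0) :
    rStat (dyckOfWalk (joinAtStar (V, W))) (V.length + 1) = trueGap (V.map Prod.snd) t := by
  have hbalanced := (isWalk_joinAtStar.2 ⟨t, hV, hW⟩).isBalanced
  have hcount := hV.count_eq
  rw [rStat_dyckOfWalk hbalanced (by simp [length_joinAtStar])]
  have hle : (V.map Prod.fst).count true ≤ (V.map Prod.snd).count true := by omega
  have ht : (V.map Prod.snd).count true - (V.map Prod.fst).count true = t := by omega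
  have hfst : (joinAtStar (V, W)).map Prod.fst =
      (V.map Prod.snd).reverse ++ true :: W.map Prod.fst := by
    simp [joinAtStar, Function.comp_def]
  have htake : ((joinAtStar (V, W)).map Prod.snd).take V.length = (V.map Prod.fst).reverse := by
    simp [joinAtStar, Function.comp_def]
  rw [hfst, htake, List.count_reverse, trueGap_append_true_cons_of_le (by simpa using hle),
    trueGap_reverse hle, ht]
  simp [joinAtStar]

theorem sStat_dyckOfWalk_joinAtStar {t : ℕ} {V W : List (Bool × Bool)} (hV : IsWalk t V 0)
    (hW : IsWalk t W 0) :
    sStat (dyckOfWalk (joinAtStar (V, W))) (V.length + 1) = trueGap (W.map Prod.snd) t := by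
  have hbalanced := (isWalk_joinAtStar.2 ⟨t, hV, hW⟩).isBalanced
  have hcount := hV.count_eq
  rw [sStat_dyckOfWalk hbalanced (by simp [length_joinAtStar])]
  have hsnd : (joinAtStar (V, W)).map Prod.snd =
      (V.map Prod.fst).reverse ++ true :: W.map Prod.snd := by
    simp [joinAtStar, Function.comp_def]
  have htake : ((joinAtStar (V, W)).map Prod.fst).take V.length = (V.map Prod.snd).reverse := by
    simp [joinAtStar, Function.comp_def]
  have hindex : (V.map Prod.snd).reverse.count true + 1 =
      (V.map Prod.fst).reverse.count true + 1 + t := by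
    simp only [List.count_reverse]
    omega
  rw [hsnd, htake, hindex, trueGap_append_true_cons]
  simp [joinAtStar]

theorem getElem?_append_cons_eq_some_iff {A : Type*} {a : A} {l l' : List A} (hl : a ∉ l)
    (hl' : a ∉ l') (j : ℕ) : (l ++ a :: l')[j]? = some a ↔ j = l.length := by
  grind

theorem exists_eq_append_cons {A : Type*} {a : A} {l : List A} {i : ℕ}
    (h : ∀ j, l[j]? = some a ↔ j = i) :
    ∃ l₁ l₂, l = l₁ ++ a :: l₂ ∧ l₁.length = i ∧ a ∉ l₁ ∧ a ∉ l₂ := by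
  have hi := (h i).2 rfl
  obtain ⟨hlt, rfl⟩ := List.getElem?_eq_some_iff.1 hi
  refine ⟨l.take i, l.drop (i + 1), by simp, by simp [hlt.le], fun hmem => ?_, fun hmem => ?_⟩
  · obtain ⟨j, hj⟩ := List.mem_iff_getElem?.1 hmem
    have := h j
    grind
  · obtain ⟨j, hj⟩ := List.mem_iff_getElem?.1 hmem
    have := h (i + 1 + j)
    grind

/-- Motzkin walks from height `t + i` to `0` with gap `q` between the `t`-th and the `(t + 1)`-st
down step, where the two ends of the walk also count as down steps, the start being the `0`-th.
Splitting a walk yields `i = 0`; the recursion on the first step involves all `i`. -/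
def IsGapWalk (q t i : ℕ) (Z : List (Bool × Bool)) : Prop :=
  (true, true) ∉ Z ∧ IsWalk (t + i) Z 0 ∧ trueGap (Z.map Prod.snd) t = q

/-- The pairs of Motzkin walks of total length `N` from a common height `t` to `0` with gaps `r` and
`s` after the `t`-th down step. -/
def gapWalkPairs (r s N : ℕ) : Set (List (Bool × Bool) × List (Bool × Bool)) :=
  {x | x.1.length + x.2.length = N ∧ ∃ t, IsGapWalk r t 0 x.1 ∧ IsGapWalk s t 0 x.2}

theorem dyckRS_add_two {r s : ℕ} (hr : 0 < r) (hs : 0 < s) (N : ℕ) :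
    dyckRS (N + 2) r s = (fun x => dyckOfWalk (joinAtStar x)) '' gapWalkPairs r s N := by
  ext w
  constructor
  · intro hw
    obtain ⟨Z, hlen, hZ, rfl⟩ := exists_dyckOfWalk_eq hw.1
    rw [show N + 2 = Z.length + 1 by omega, dyckOfWalk_mem_dyckRS_iff hZ hr hs] at hw
    obtain ⟨i, hr, hs, hstars⟩ := hw
    obtain ⟨V, W, rfl, rfl, hV, hW⟩ := exists_eq_append_cons hstars
    have hjoin : V ++ (true, true) :: W = joinAtStar (V.reverse.map Prod.swap, W) := by
      simp [joinAtStar]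
    rw [hjoin] at hlen hZ hr hs ⊢
    obtain ⟨t, htV, htW⟩ := isWalk_joinAtStar.1 hZ
    have hrt := rStat_dyckOfWalk_joinAtStar htV htW
    have hst := sStat_dyckOfWalk_joinAtStar htV htW
    refine ⟨_, ⟨by simpa [length_joinAtStar] using hlen, t, ⟨?_, htV, ?_⟩, hW, htW, ?_⟩, rfl⟩
    · simpa [Prod.swap] using hV
    · rw [← hr, ← hrt]; simp
    · rw [← hs, ← hst]; simp
  · rintro ⟨⟨V, W⟩, ⟨rfl, t, ⟨hV, htV, hrt⟩, hW, htW, hst⟩, rfl⟩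
    have hZ := isWalk_joinAtStar.2 ⟨t, htV, htW⟩
    have hmem := dyckOfWalk_mem_dyckRS_iff hZ hr hs
    rw [length_joinAtStar] at hmem
    refine hmem.2 ⟨V.length, (rStat_dyckOfWalk_joinAtStar htV htW).trans hrt,
      (sStat_dyckOfWalk_joinAtStar htV htW).trans hst, fun j => ?_⟩
    rw [joinAtStar, getElem?_append_cons_eq_some_iff (by simpa [Prod.swap] using hV) hW]
    simp

theorem ncard_dyckRS_add_two {r s : ℕ} (hr : 0 < r) (hs : 0 < s) (N : ℕ) :
    (dyckRS (N + 2) r s).ncard = (gapWalkPairs r s N).ncard := by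
  rw [dyckRS_add_two hr hs]
  refine Set.InjOn.ncard_image ?_
  rintro ⟨V, W⟩ ⟨-, t, ⟨hV, htV, -⟩, hW, htW, -⟩ ⟨V', W'⟩ ⟨-, t', ⟨hV', htV', -⟩, hW', htW', -⟩ h
  have hjoin := dyckOfWalk_injOn (isWalk_joinAtStar.2 ⟨t, htV, htW⟩).isBalanced
    (isWalk_joinAtStar.2 ⟨t', htV', htW'⟩).isBalanced h
  obtain ⟨hVV', -, rfl⟩ := (List.append_cons_inj_of_notMem (by simpa [Prod.swap] using hV)
    hW).1 hjoin
  have hswap : Function.Injective (List.map (Prod.swap (α := Bool) (β := Bool))) :=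
    List.map_injective_iff.2 Prod.swap_injective
  exact Prod.ext (List.reverse_injective (hswap hVV')) rfl

theorem dyckRS_eq_empty_of_le_one {n : ℕ} (hn : n ≤ 1) (r s : ℕ) : dyckRS n r s = ∅ := by
  have : n - 1 = 0 := by omega
  simp [dyckRS, this]

section GeneratingFunctions

open PowerSeries

/-! ### Generating functions of classes of words -/

/-- The generating function by length of the words with property `P`. -/
noncomputable def wordGF {A : Type*} (P : List A → Prop) : ℚ⟦X⟧ :=
  mk fun n => ({w | w.length = n ∧ P w}.ncard : ℚ)

theorem ncard_biUnion_finset {ι A : Type*} {s : Finset ι} {t : ι → Set A}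
    (ht : ∀ i ∈ s, (t i).Finite) (hdisj : (s : Set ι).PairwiseDisjoint t) :
    (⋃ i ∈ s, t i).ncard = ∑ i ∈ s, (t i).ncard := by
  rw [← finsum_mem_coe_finset]
  exact s.finite_toSet.ncard_biUnion ht hdisj

theorem finite_setOf_length_eq_and {A : Type*} [Finite A] (P : List A → Prop) (n : ℕ) :
    {w | w.length = n ∧ P w}.Finite :=
  (List.finite_length_eq A n).subset fun _ hw => hw.1

section Words

variable {A : Type*}

theorem wordGF_eq_zero {P : List A → Prop} (hP : ∀ w, ¬ P w) : wordGF P = 0 := by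
  ext n
  simp [wordGF, hP]

open Classical in
theorem wordGF_eq_C_add_X_mul_sum [Fintype A] (P : List A → Prop) :
    wordGF P = C (if P [] then 1 else 0) + X * ∑ a, wordGF fun w => P (a :: w) := by
  ext n
  rcases n with _ | n
  · have hset : {w | w.length = 0 ∧ P w} = if P [] then {[]} else ∅ := by
      ext w
      rcases w with _ | ⟨a, w⟩ <;> split_ifs <;> simp_all
    rw [wordGF, coeff_mk, hset]
    split_ifs <;> simp
  · have hset : {w | w.length = n + 1 ∧ P w} =
        ⋃ a ∈ Finset.univ, List.cons a '' {w | w.length = n ∧ P (a :: w)} := by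
      ext w
      rcases w with _ | ⟨a, w⟩ <;> simp
    have hcard := ncard_biUnion_finset (s := Finset.univ)
      (t := fun a : A => List.cons a '' {w | w.length = n ∧ P (a :: w)})
      (fun a _ => (finite_setOf_length_eq_and _ n).image _) fun a _ b _ hab => by
        refine Set.disjoint_left.2 ?_
        rintro _ ⟨w, -, rfl⟩ ⟨w', -, h⟩
        exact hab (List.cons.inj h).1.symm
    simp only [Set.ncard_image_of_injective _ List.cons_injective] at hcard
    rw [map_add, coeff_C, if_neg n.succ_ne_zero, zero_add, coeff_succ_X_mul, map_sum, wordGF,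
      coeff_mk, hset, hcard]
    simp [wordGF]

theorem coeff_wordGF_mul [Finite A] (P Q : List A → Prop) (N : ℕ) :
    coeff N (wordGF P * wordGF Q) =
      ({x : List A × List A | x.1.length + x.2.length = N ∧ P x.1 ∧ Q x.2}.ncard : ℚ) := by
  have hset : {x : List A × List A | x.1.length + x.2.length = N ∧ P x.1 ∧ Q x.2} =
      ⋃ k ∈ Finset.HasAntidiagonal.antidiagonal N,
        {v | v.length = k.1 ∧ P v} ×ˢ {w | w.length = k.2 ∧ Q w} := by
    ext x
    simp only [Set.mem_ofPred_eq, Set.mem_iUnion, Set.mem_prod, exists_prop,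
      Prod.exists, Finset.HasAntidiagonal.mem_antidiagonal]
    grind
  rw [hset, ncard_biUnion_finset]
  · simp [coeff_mul, wordGF, Set.ncard_prod]
  · exact fun k _ => (finite_setOf_length_eq_and P k.1).prod (finite_setOf_length_eq_and Q k.2)
  · intro k _ l _ hkl
    refine Set.disjoint_left.2 ?_
    rintro x ⟨⟨h₁, -⟩, h₂, -⟩ ⟨⟨h₁', -⟩, h₂', -⟩
    exact hkl (Prod.ext (h₁.symm.trans h₁') (h₂.symm.trans h₂'))

end Words

section Transfer

variable {R : Type*} [CommRing R]

/-- A solution of a homogeneous transfer system is divisible by every power of `X`. -/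
theorem eq_zero_of_eq_X_mul_sum {ι : Type*} {D : ι → R⟦X⟧}
    (hD : ∀ i, ∃ s : Finset ι, D i = X * ∑ j ∈ s, D j) (i : ι) : D i = 0 := by
  have hdvd (n : ℕ) : ∀ i, X ^ n ∣ D i := by
    induction n with
    | zero => simp
    | succ n ih =>
      intro i
      obtain ⟨s, hs⟩ := hD i
      rw [hs, pow_succ']
      exact mul_dvd_mul_left X (Finset.dvd_sum fun j _ => ih j)
  ext n
  exact X_pow_dvd_iff.1 (hdvd (n + 1) i) n n.lt_succ_self

theorem coeff_mul_geometric_eq_sum {r y : R⟦X⟧} (hy : X ∣ y) (hr : r * (1 - y) = 1) (g : R⟦X⟧)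
    (N : ℕ) : coeff N (g * r) = ∑ t ∈ Finset.range (N + 1), coeff N (g * y ^ t) := by
  have hgeom := geom_sum_mul_neg y (N + 1)
  have hr' : g * r = g * ∑ t ∈ Finset.range (N + 1), y ^ t + g * y ^ (N + 1) * r := by
    linear_combination (g * ∑ t ∈ Finset.range (N + 1), y ^ t) * hr - g * r * hgeom
  have hdvd : X ^ (N + 1) ∣ g * y ^ (N + 1) * r :=
    ((pow_dvd_pow_of_dvd hy _).mul_left g).mul_right r
  rw [hr', map_add, X_pow_dvd_iff.1 hdvd N N.lt_succ_self, Finset.mul_sum, map_sum, add_zero]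

end Transfer

/-! ### Motzkin walks -/

/-- The generating function of the Motzkin walks, that is walks without the color `(true, true)`,
from height `k` to `0`. -/
noncomputable def motzkinWalkGF (k : ℕ) : ℚ⟦X⟧ :=
  wordGF fun Z => (true, true) ∉ Z ∧ IsWalk k Z 0

theorem motzkinWalkGF_zero_eq :
    motzkinWalkGF 0 = 1 + X * (motzkinWalkGF 0 + motzkinWalkGF 1) := by
  conv_lhs => rw [motzkinWalkGF, wordGF_eq_C_add_X_mul_sum]
  simp [Fintype.sum_prod_type, IsWalk, motzkinWalkGF, wordGF_eq_zero, add_comm]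

theorem motzkinWalkGF_succ_eq (k : ℕ) :
    motzkinWalkGF (k + 1) =
      X * (motzkinWalkGF k + motzkinWalkGF (k + 1) + motzkinWalkGF (k + 2)) := by
  conv_lhs => rw [motzkinWalkGF, wordGF_eq_C_add_X_mul_sum]
  simp [Fintype.sum_prod_type, IsWalk, motzkinWalkGF, wordGF_eq_zero]
  ring

theorem motzkinWalkGF_succ (k : ℕ) :
    motzkinWalkGF (k + 1) = X * motzkinWalkGF 0 * motzkinWalkGF k := by
  refine sub_eq_zero.1 (eq_zero_of_eq_X_mul_sum (D := fun k =>
    motzkinWalkGF (k + 1) - X * motzkinWalkGF 0 * motzkinWalkGF k) (fun k => ?_) k)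
  rcases k with _ | k
  · refine ⟨{0, 1}, ?_⟩
    rw [Finset.sum_pair (by simp)]
    linear_combination motzkinWalkGF_succ_eq 0 - X * motzkinWalkGF 0 * motzkinWalkGF_zero_eq
  · refine ⟨{k, k + 1, k + 2}, ?_⟩
    rw [Finset.sum_insert (by simp), Finset.sum_pair (by simp)]
    linear_combination motzkinWalkGF_succ_eq (k + 1) -
      X * motzkinWalkGF 0 * motzkinWalkGF_succ_eq k

/-- The step of a Motzkin path as a colored step, with its first bit for up and second for down. -/
def motzkinStep (a : Option Bool) : Bool × Bool := (a == some true, a == some false)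

theorem motzkinStep_injective : Function.Injective motzkinStep := by
  decide

theorem mem_range_map_motzkinStep {Z : List (Bool × Bool)} :
    Z ∈ Set.range (List.map motzkinStep) ↔ (true, true) ∉ Z := by
  have hrange (z : Bool × Bool) : z ∈ Set.range motzkinStep ↔ z ≠ (true, true) := by
    revert z
    decide
  simp only [Set.range_list_map, Set.mem_ofPred_eq, hrange]
  grind

theorem isMotzkinWord_iff_isWalk {w : List (Option Bool)} :
    IsMotzkinWord w ↔ IsWalk 0 (w.map motzkinStep) 0 := by
  have hcount (c : Bool) (l : List (Option Bool)) :
      (l.map (· == some c)).count true = l.count (some c) := by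
    simp [List.count, List.countP_map, Function.comp_def]
  have htake (c : Bool) (i : ℕ) :
      ((w.map (· == some c)).take i).count true = (w.take i).count (some c) := by
    rw [← List.map_take, hcount]
  have hprefix : (∀ p, p <+: w → p.count (some false) ≤ p.count (some true)) ↔
      ∀ i, (w.take i).count (some false) ≤ (w.take i).count (some true) :=
    ⟨fun h i => h _ (w.take_prefix i), fun h p hp => List.prefix_iff_eq_take.1 hp ▸ h p.length⟩
  simp only [IsMotzkinWord, hprefix, isWalk_iff, List.map_map, Function.comp_def, motzkinStep,
    hcount, htake, zero_add, eq_comm]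

theorem motzkinGF_eq_motzkinWalkGF : motzkinGF = motzkinWalkGF 0 := by
  ext n
  have hset : {Z | Z.length = n ∧ (true, true) ∉ Z ∧ IsWalk 0 Z 0} =
      List.map motzkinStep '' {w | w.length = n ∧ IsMotzkinWord w} := by
    ext Z
    simp only [← mem_range_map_motzkinStep]
    constructor
    · rintro ⟨hn, ⟨w, rfl⟩, hw⟩
      exact ⟨w, ⟨by simpa using hn, isMotzkinWord_iff_isWalk.2 hw⟩, rfl⟩
    · rintro ⟨w, ⟨hn, hw⟩, rfl⟩
      exact ⟨by simpa using hn, ⟨w, rfl⟩, isMotzkinWord_iff_isWalk.1 hw⟩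
  rw [motzkinGF, motzkinWalkGF, wordGF, coeff_mk, coeff_mk, hset,
    Set.ncard_image_of_injective _ (List.map_injective_iff.2 motzkinStep_injective), motzkin]

theorem motzkinWalkGF_eq (k : ℕ) : motzkinWalkGF k = motzkinGF * (X * motzkinGF) ^ k := by
  induction k with
  | zero => rw [motzkinGF_eq_motzkinWalkGF, pow_zero, mul_one]
  | succ k ih => rw [motzkinWalkGF_succ, ih, ← motzkinGF_eq_motzkinWalkGF]; ring

theorem X_mul_motzkinGF_eq :
    X * motzkinGF = X + X * (X * motzkinGF) + X * (X * motzkinGF) ^ 2 := by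
  have h := motzkinWalkGF_zero_eq
  rw [motzkinWalkGF_eq, motzkinWalkGF_eq] at h
  linear_combination X * h

theorem derivative_X_mul_motzkinGF :
    (X ^ 2 * derivative ℚ (X * motzkinGF) + 1) * (1 - (X * motzkinGF) ^ 2) = 1 := by
  set f := X * motzkinGF
  have hf : f = X + X * f + X * f ^ 2 := X_mul_motzkinGF_eq
  have hderiv : derivative ℚ f =
      1 + f + f ^ 2 + X * derivative ℚ f + 2 * X * f * derivative ℚ f := by
    conv_lhs => rw [hf]
    simp [pow_two]
    ring
  linear_combination (-(X * derivative ℚ f) - f) * hf + X * f * hderiv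

/-! ### Walks with a prescribed gap -/

theorem wordGF_isGapWalk_one_zero (i : ℕ) : wordGF (IsGapWalk 1 0 i) = (X * motzkinGF) ^ i := by
  have hpos (l : List Bool) : trueGap l 0 ≠ 0 := (trueGap_pos l 0).ne'
  rw [wordGF_eq_C_add_X_mul_sum]
  rcases i with _ | i
  · simp [Fintype.sum_prod_type, IsGapWalk, IsWalk, trueGap, wordGF_eq_zero, hpos]
  · have hGF := motzkinWalkGF_eq i
    rw [motzkinWalkGF] at hGF
    simp [Fintype.sum_prod_type, IsGapWalk, IsWalk, trueGap, wordGF_eq_zero, hpos, hGF]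
    ring

theorem wordGF_isGapWalk_add_two_zero (c i : ℕ) :
    wordGF (IsGapWalk (c + 2) 0 i) =
      X * (wordGF (IsGapWalk (c + 1) 0 i) + wordGF (IsGapWalk (c + 1) 0 (i + 1))) := by
  unfold IsGapWalk
  conv_lhs => rw [wordGF_eq_C_add_X_mul_sum]
  simp [Fintype.sum_prod_type, IsWalk, trueGap, wordGF_eq_zero]
  ring

theorem wordGF_isGapWalk_succ (q t i : ℕ) :
    wordGF (IsGapWalk q (t + 1) i) = X * (wordGF (IsGapWalk q (t + 1) i) +
      wordGF (IsGapWalk q (t + 1) (i + 1)) + wordGF (IsGapWalk q t i)) := by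
  unfold IsGapWalk
  conv_lhs => rw [wordGF_eq_C_add_X_mul_sum]
  simp [Fintype.sum_prod_type, IsWalk, trueGap, wordGF_eq_zero, add_right_comm t 1,
    ← add_assoc]
  ring

theorem wordGF_isGapWalk_succ_zero (c i : ℕ) :
    wordGF (IsGapWalk (c + 1) 0 i) = (X * (1 + X * motzkinGF)) ^ c * (X * motzkinGF) ^ i := by
  induction c generalizing i with
  | zero => rw [wordGF_isGapWalk_one_zero, pow_zero, one_mul]
  | succ c ih => rw [wordGF_isGapWalk_add_two_zero, ih, ih]; ring

theorem wordGF_isGapWalk (c t i : ℕ) : wordGF (IsGapWalk (c + 1) t i) =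
    (X * (1 + X * motzkinGF)) ^ c * (X * motzkinGF) ^ (t + i) := by
  refine sub_eq_zero.1 (eq_zero_of_eq_X_mul_sum (ι := ℕ × ℕ) (D := fun k =>
    wordGF (IsGapWalk (c + 1) k.1 k.2) - (X * (1 + X * motzkinGF)) ^ c *
      (X * motzkinGF) ^ (k.1 + k.2)) (fun k => ?_) (t, i))
  rcases k with ⟨_ | t, i⟩
  · exact ⟨∅, by simp [wordGF_isGapWalk_succ_zero]⟩
  · refine ⟨{(t + 1, i), (t + 1, i + 1), (t, i)}, ?_⟩
    rw [Finset.sum_insert (by simp), Finset.sum_pair (by simp)]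
    linear_combination wordGF_isGapWalk_succ (c + 1) t i -
      (X * (1 + X * motzkinGF)) ^ c * (X * motzkinGF) ^ (t + i) * X_mul_motzkinGF_eq

theorem ncard_gapWalkPairs (r s N : ℕ) :
    ((gapWalkPairs r s N).ncard : ℚ) = ∑ t ∈ Finset.range (N + 1),
      coeff N (wordGF (IsGapWalk r t 0) * wordGF (IsGapWalk s t 0)) := by
  have hset : gapWalkPairs r s N = ⋃ t ∈ Finset.range (N + 1),
      {x | x.1.length + x.2.length = N ∧ IsGapWalk r t 0 x.1 ∧ IsGapWalk s t 0 x.2} := by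
    ext x
    simp only [gapWalkPairs, Set.mem_ofPred_eq, Set.mem_iUnion, Finset.mem_range, exists_prop]
    constructor
    · rintro ⟨hN, t, hV, hW⟩
      have := IsWalk.le_length (h := t) hV.2.1
      exact ⟨t, by omega, hN, hV, hW⟩
    · rintro ⟨t, -, hN, hV, hW⟩
      exact ⟨hN, t, hV, hW⟩
  rw [hset, ncard_biUnion_finset, Nat.cast_sum]
  · simp only [coeff_wordGF_mul]
  · refine fun t _ => ((List.finite_length_le _ N).prod (List.finite_length_le _ N)).subset ?_
    rintro x ⟨hN, -⟩
    exact ⟨(Nat.le_add_right _ _).trans_eq hN, (Nat.le_add_left _ _).trans_eq hN⟩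
  · intro t _ t' _ htt'
    refine Set.disjoint_left.2 ?_
    rintro x ⟨-, hV, -⟩ ⟨-, hV', -⟩
    exact htt' (hV.2.1.unique hV'.2.1)

theorem dyckRS_gf (r s : ℕ) :
    PowerSeries.mk (fun n => ((dyckRS n (r + 1) (s + 1)).ncard : ℚ)) =
      X ^ (r + s + 2) * (1 + X * motzkinGF) ^ (r + s) *
        (X ^ 2 * derivative ℚ (X * motzkinGF) + 1) := by
  rw [pow_add, mul_right_comm (X ^ (r + s)), ← mul_pow, mul_right_comm _ (X ^ 2),
    mul_comm _ (X ^ 2)]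
  ext n
  rw [coeff_mk, coeff_X_pow_mul']
  split_ifs with hn
  · obtain ⟨N, rfl⟩ := Nat.exists_eq_add_of_le' hn
    have hX : X ∣ (X * motzkinGF) ^ 2 := dvd_pow (dvd_mul_right _ _) two_ne_zero
    rw [ncard_dyckRS_add_two r.succ_pos s.succ_pos, ncard_gapWalkPairs, Nat.add_sub_cancel,
      coeff_mul_geometric_eq_sum hX derivative_X_mul_motzkinGF]
    refine Finset.sum_congr rfl fun t _ => ?_
    rw [wordGF_isGapWalk, wordGF_isGapWalk]
    ring_nf
  · simp [dyckRS_eq_empty_of_le_one (by omega : n ≤ 1)]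

end GeneratingFunctions

/-! ### Products and binomial coefficients equal to a prime -/

theorem prod_eq_prime_iff {ι : Type*} {s : Finset ι} {f : ι → ℕ} {p : ℕ} (hp : p.Prime) :
    ∏ i ∈ s, f i = p ↔ ∃ i ∈ s, f i = p ∧ ∀ j ∈ s, j ≠ i → f j = 1 := by
  classical
  constructor
  · intro h
    obtain ⟨i, hi, hpi⟩ := (hp.prime.dvd_finsetProd_iff f).1 h.symm.dvd
    have hfi : f i = p := Nat.dvd_antisymm (h ▸ Finset.dvd_prod_of_mem f hi) hpi
    have hrest : ∏ j ∈ s.erase i, f j = 1 := by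
      rw [← Finset.mul_prod_erase s f hi, hfi] at h
      exact Nat.eq_of_mul_eq_mul_left hp.pos (h.trans (mul_one p).symm)
    exact ⟨i, hi, hfi, fun j hj hji =>
      Finset.prod_eq_one_iff.1 hrest j (Finset.mem_erase.2 ⟨hji, hj⟩)⟩
  · rintro ⟨i, hi, hfi, h⟩
    rw [Finset.prod_eq_single_of_mem i hi h, hfi]

theorem mul_add_one_le_choose_add (r s : ℕ) : r * s + 1 ≤ (r + s).choose r := by
  induction r generalizing s with
  | zero => simp
  | succ r ihr =>
    induction s with
    | zero => simp
    | succ s ihs =>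
      calc (r + 1) * (s + 1) + 1 ≤ (r * (s + 1) + 1) + ((r + 1) * s + 1) := by nlinarith
        _ ≤ (r + (s + 1)).choose r + (r + 1 + s).choose (r + 1) := add_le_add (ihr (s + 1)) ihs
        _ = (r + 1 + (s + 1)).choose (r + 1) := by
          rw [add_right_comm r 1 (s + 1), Nat.choose_succ_succ', add_right_comm r 1 s, add_assoc r]

theorem choose_add_eq_prime_iff {r s p : ℕ} (hp : p.Prime) :
    (r + s).choose r = p ↔ r = 1 ∧ s = p - 1 ∨ r = p - 1 ∧ s = 1 := by
  have hp2 := hp.two_le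
  constructor
  · intro h
    have hdvd : p ∣ (r + s).factorial := by
      rw [← Nat.choose_mul_factorial_mul_factorial (Nat.le_add_right r s), h, mul_assoc]
      exact dvd_mul_right _ _
    have hle : r * s + 1 ≤ r + s :=
      (mul_add_one_le_choose_add r s).trans (h.trans_le (hp.dvd_factorial.1 hdvd))
    rcases r with _ | _ | r
    · rw [zero_add, Nat.choose_zero_right] at h
      omega
    · rw [zero_add, Nat.choose_one_right] at h
      omega
    · rcases s with _ | _ | s
      · rw [add_zero, Nat.choose_self] at h
        omega
      · rw [Nat.choose_symm_add, zero_add, Nat.choose_one_right] at h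
        omega
      · nlinarith
  · rintro (⟨rfl, rfl⟩ | ⟨rfl, rfl⟩)
    · rw [Nat.choose_one_right]
      omega
    · rw [Nat.choose_symm_add, Nat.choose_one_right]
      omega

theorem dyckL_prime_eq_union {p : ℕ} (hp : p.Prime) (n : ℕ) :
    dyckL n p = dyckRS n 1 (p - 1) ∪ dyckRS n (p - 1) 1 := by
  have hp2 := hp.two_le
  ext w
  simp only [dyckL, dyckRS, LStat, prod_eq_prime_iff hp, choose_add_eq_prime_iff hp,
    Nat.choose_eq_one_iff, Set.mem_union, Set.mem_ofPred_eq, ← and_or_left, ← exists_or]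
  refine and_congr_right fun _ => exists_congr fun i => and_congr_right fun _ => ?_
  grind

theorem disjoint_dyckRS {r r' : ℕ} (hr : r ≠ r') (n s s' : ℕ) :
    Disjoint (dyckRS n r s) (dyckRS n r' s') := by
  refine Set.disjoint_left.2 ?_
  rintro w ⟨-, i, -, -, rfl, -, hi⟩ ⟨-, j, hj, hpos, rfl, -⟩
  exact hr (by rw [hi j hj hpos])

theorem finite_dyckRS (n r s : ℕ) : (dyckRS n r s).Finite :=
  (List.finite_length_eq Bool (2 * n)).subset fun _ hw => hw.1.1

theorem ncard_dyckL_prime {p : ℕ} (hp : p.Prime) (hp3 : 3 ≤ p) (n : ℕ) :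
    (dyckL n p).ncard = (dyckRS n 1 (p - 1)).ncard + (dyckRS n (p - 1) 1).ncard := by
  rw [dyckL_prime_eq_union hp]
  exact Set.ncard_union_eq (disjoint_dyckRS (by omega) ..) (finite_dyckRS ..) (finite_dyckRS ..)

open PowerSeries in
/-- **Theorem (generating function for L = p, p an odd prime).**
`Σ |𝒟ₙᵖ| xⁿ = 2·xᵖ·(1 + x·m(x))^{p-2}·(x²·(x·m(x))′ + 1)`. -/
theorem dyck_L_eq_prime_gf (p : ℕ) (hp : p.Prime) (hp3 : 3 ≤ p) :
    PowerSeries.mk (fun n => ((dyckL n p).ncard : ℚ)) =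
      2 * X ^ p * (1 + X * motzkinGF) ^ (p - 2) *
        (X ^ 2 * PowerSeries.derivative ℚ (X * motzkinGF) + 1) := by
  obtain ⟨c, rfl⟩ : ∃ c, p = c + 2 := Nat.exists_eq_add_of_le' hp.two_le
  have hsum : PowerSeries.mk (fun n => ((dyckL n (c + 2)).ncard : ℚ)) =
      PowerSeries.mk (fun n => ((dyckRS n (0 + 1) (c + 1)).ncard : ℚ)) +
        PowerSeries.mk (fun n => ((dyckRS n (c + 1) (0 + 1)).ncard : ℚ)) := by
    ext n
    simp [ncard_dyckL_prime hp hp3]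
  rw [hsum, dyckRS_gf, dyckRS_gf, Nat.add_sub_cancel]
  ring
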